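/- Fix ρ ∈ (0,1) and α ∈ (0,1). Let (α_n) be a sequence in (0,1) with n·α_n → α, let c_n be defined by Φ(−c_n) = α_n, and for n ≥ 2 let z₀(n) be the unique real number with Φ(−d(ρ, c_n, z₀(n))) = 1/n. Then c_n − d(ρ, c_n, z₀(n)) → 0 as n → ∞. -/

import Mathlib

open MeasureTheory Filter

/-- The standard normal density. -/
noncomputable def phi (x : ℝ) : ℝ := (Real.sqrt (2 * Real.pi))⁻¹ * Real.exp (-x ^ 2 / 2)

/-- The standard normal cumulative distribution function. -/
noncomputable def Phi (x : ℝ) : ℝ := ∫ t in Set.Iic x, phi t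

/-- d(ρ,c,z) = (c + √ρ·z)/√(1−ρ). -/
noncomputable def dd (ρ c z : ℝ) : ℝ := (c + Real.sqrt ρ * z) / Real.sqrt (1 - ρ)

/-- G(ρ,c,z) = (c + z/√ρ)/(2(1−ρ)^{3/2}). -/
noncomputable def G (ρ c z : ℝ) : ℝ :=
  (c + z / Real.sqrt ρ) / (2 * (1 - ρ) ^ ((3 : ℝ) / 2))

/-- H_n(ρ,c) = ∫ Φ(d(ρ,c,z))^n φ(z) dz. -/
noncomputable def Hn (n : ℕ) (ρ c : ℝ) : ℝ := ∫ z : ℝ, (Phi (dd ρ c z)) ^ n * phi z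

/-!
If `0 < ε` then `φ (t - ε) = exp (ε t - ε² / 2) φ t`, and integrating over `t ≤ x` gives
`Φ (x - ε) ≤ exp (ε x - ε² / 2) Φ x`: the lower tail of `Φ` varies rapidly, in the sense that
`Φ (x - ε) / Φ x → 0` as `x → -∞`. Writing `d n` for `dd ρ (c n) (z₀ n)`, both `Φ (-c n)` and
`Φ (-d n) = 1 / n` tend to `0`, so `-c n` and `-d n` tend to `-∞`, while the ratio of the two values
has the positive limit `α`. Staying `ε` apart infinitely often would force that ratio, or its
inverse, to `0` along a subsequence.
-/

section RapidVariation

variable {ι : Type*} {l : Filter ι} {F : ℝ → ℝ} {u v : ι → ℝ}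

theorem tendsto_atBot_of_monotone_of_pos (hF : Monotone F) (hpos : ∀ x, 0 < F x)
    (hu : Tendsto (fun i => F (u i)) l (nhds 0)) : Tendsto u l atBot :=
  tendsto_atBot.2 fun x =>
    (hu.eventually_lt_const (hpos x)).mono fun _ hi => (hF.reflect_lt hi).le

theorem eventually_sub_lt_of_tendsto_div (hF : Monotone F) (hpos : ∀ x, 0 < F x) {ε : ℝ}
    (hrapid : Tendsto (fun x => F (x - ε) / F x) atBot (nhds 0)) (hu : Tendsto u l atBot)
    {r : ℝ} (hr : 0 < r) (hdiv : Tendsto (fun i => F (v i) / F (u i)) l (nhds r)) :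
    ∀ᶠ i in l, u i - v i < ε := by
  filter_upwards [(hrapid.comp hu).eventually_lt hdiv hr] with i hi
  have hlt : F (u i - ε) < F (v i) := (div_lt_div_iff_of_pos_right (hpos (u i))).1 hi
  exact sub_lt_comm.1 (hF.reflect_lt hlt)

theorem tendsto_sub_nhds_zero_of_tendsto_div (hF : Monotone F) (hpos : ∀ x, 0 < F x)
    (hrapid : ∀ ε, 0 < ε → Tendsto (fun x => F (x - ε) / F x) atBot (nhds 0))
    (hu : Tendsto u l atBot) (hv : Tendsto v l atBot) {r : ℝ} (hr : 0 < r)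
    (hdiv : Tendsto (fun i => F (u i) / F (v i)) l (nhds r)) :
    Tendsto (fun i => u i - v i) l (nhds 0) := by
  have hdiv_inv : Tendsto (fun i => F (v i) / F (u i)) l (nhds r⁻¹) := by
    simpa only [inv_div] using hdiv.inv₀ hr.ne'
  refine Metric.tendsto_nhds.2 fun ε hε => ?_
  filter_upwards [eventually_sub_lt_of_tendsto_div hF hpos (hrapid ε hε) hu (inv_pos.2 hr) hdiv_inv,
    eventually_sub_lt_of_tendsto_div hF hpos (hrapid ε hε) hv hr hdiv] with i huv hvu
  rw [dist_zero_right, Real.norm_eq_abs]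
  exact abs_sub_lt_iff.2 ⟨huv, hvu⟩

theorem tendsto_sub_nhds_zero_of_tendsto_mul (hF : Monotone F) (hpos : ∀ x, 0 < F x)
    (hrapid : ∀ ε, 0 < ε → Tendsto (fun x => F (x - ε) / F x) atBot (nhds 0))
    {w : ι → ℝ} (hw : Tendsto w l atTop) {a b : ℝ} (ha : 0 < a) (hb : 0 < b)
    (hu : Tendsto (fun i => w i * F (u i)) l (nhds a))
    (hv : Tendsto (fun i => w i * F (v i)) l (nhds b)) :
    Tendsto (fun i => u i - v i) l (nhds 0) := by
  have hw_ne : ∀ᶠ i in l, w i ≠ 0 := hw.eventually_ne_atTop 0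
  have atBot_of_mul {s : ι → ℝ} {r : ℝ} (hs : Tendsto (fun i => w i * F (s i)) l (nhds r)) :
      Tendsto s l atBot :=
    tendsto_atBot_of_monotone_of_pos hF hpos <|
      (hs.div_atTop hw).congr' (hw_ne.mono fun _ hi => mul_div_cancel_left₀ _ hi)
  exact tendsto_sub_nhds_zero_of_tendsto_div hF hpos hrapid (atBot_of_mul hu) (atBot_of_mul hv)
    (div_pos ha hb) ((hu.div hv hb.ne').congr' (hw_ne.mono fun _ hi => mul_div_mul_left _ _ hi))

end RapidVariation

theorem phi_eq_gaussianPDFReal : phi = ProbabilityTheory.gaussianPDFReal 0 1 := by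
  ext x
  simp [phi, ProbabilityTheory.gaussianPDFReal]

theorem phi_pos (x : ℝ) : 0 < phi x :=
  phi_eq_gaussianPDFReal ▸ ProbabilityTheory.gaussianPDFReal_pos 0 1 x one_ne_zero

theorem integrable_phi : Integrable phi :=
  phi_eq_gaussianPDFReal ▸ ProbabilityTheory.integrable_gaussianPDFReal 0 1

theorem phi_sub (t ε : ℝ) : phi (t - ε) = Real.exp (ε * t - ε ^ 2 / 2) * phi t := by
  rw [phi, phi, mul_left_comm, ← Real.exp_add]
  ring_nf

theorem Phi_monotone : Monotone Phi := fun _ _ hxy =>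
  setIntegral_mono_set integrable_phi.integrableOn (ae_of_all _ fun t => (phi_pos t).le)
    (Set.Iic_subset_Iic.2 hxy).eventuallyLE

theorem Phi_pos (x : ℝ) : 0 < Phi x := by
  have hsupp : Function.support phi = Set.univ :=
    Function.support_eq_univ fun t => (phi_pos t).ne'
  rw [Phi, setIntegral_pos_iff_support_of_nonneg_ae (ae_of_all _ fun t => (phi_pos t).le)
    integrable_phi.integrableOn, hsupp, Set.univ_inter, Real.volume_Iic]
  exact ENNReal.zero_lt_top

theorem Phi_sub_eq_setIntegral (x ε : ℝ) : Phi (x - ε) = ∫ t in Set.Iic x, phi (t - ε) := by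
  rw [Phi, ← (measurePreserving_sub_right volume ε).setIntegral_preimage_emb
    (measurableEmbedding_subRight ε), Set.preimage_sub_const_Iic, sub_add_cancel]

theorem Phi_sub_le {ε : ℝ} (hε : 0 ≤ ε) (x : ℝ) :
    Phi (x - ε) ≤ Real.exp (ε * x - ε ^ 2 / 2) * Phi x := by
  rw [Phi_sub_eq_setIntegral, Phi, ← integral_const_mul]
  refine setIntegral_mono_on (integrable_phi.comp_sub_right ε).integrableOn
    (integrable_phi.const_mul _).integrableOn measurableSet_Iic fun t (ht : t ≤ x) => ?_
  rw [phi_sub]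
  have := (phi_pos t).le
  gcongr

theorem tendsto_Phi_sub_div_Phi_atBot {ε : ℝ} (hε : 0 < ε) :
    Tendsto (fun x => Phi (x - ε) / Phi x) atBot (nhds 0) := by
  have hexp : Tendsto (fun x => Real.exp (ε * x - ε ^ 2 / 2)) atBot (nhds 0) :=
    Real.tendsto_exp_atBot.comp <|
      tendsto_atBot_add_const_right _ _ (tendsto_id.const_mul_atBot hε)
  exact squeeze_zero (fun x => (div_pos (Phi_pos _) (Phi_pos x)).le)
    (fun x => (div_le_iff₀ (Phi_pos x)).2 (Phi_sub_le hε.le x)) hexp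

theorem cn_sub_d_z0_tendsto_zero_general {α : ℝ} (hα : 0 < α) {c d : ℕ → ℝ}
    (hc : Tendsto (fun n : ℕ => (n : ℝ) * Phi (-(c n))) atTop (nhds α))
    (hd : ∀ᶠ n : ℕ in atTop, Phi (-(d n)) = 1 / n) :
    Tendsto (fun n => c n - d n) atTop (nhds 0) := by
  have hd_mul : Tendsto (fun n : ℕ => (n : ℝ) * Phi (-(d n))) atTop (nhds 1) := by
    refine tendsto_const_nhds.congr' ?_
    filter_upwards [hd, eventually_ne_atTop 0] with n hn hn_ne
    rw [hn, mul_one_div_cancel (Nat.cast_ne_zero.2 hn_ne)]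
  have hsub : Tendsto (fun n => -(d n) - -(c n)) atTop (nhds 0) :=
    tendsto_sub_nhds_zero_of_tendsto_mul Phi_monotone Phi_pos
      (fun _ hε => tendsto_Phi_sub_div_Phi_atBot hε) tendsto_natCast_atTop_atTop
      one_pos hα hd_mul hc
  simpa only [neg_sub_neg] using hsub

theorem cn_sub_d_z0_tendsto_zero
    (ρ : ℝ) (hρ : ρ ∈ Set.Ioo (0:ℝ) 1) (α : ℝ) (hα : α ∈ Set.Ioo (0:ℝ) 1)
    (αseq : ℕ → ℝ) (hαseq : ∀ n, αseq n ∈ Set.Ioo (0:ℝ) 1)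
    (hlim : Tendsto (fun n : ℕ => (n : ℝ) * αseq n) atTop (nhds α))
    (c : ℕ → ℝ) (hc : ∀ n, Phi (-(c n)) = αseq n)
    (z₀ : ℕ → ℝ) (hz₀ : ∀ n : ℕ, 2 ≤ n → Phi (-(dd ρ (c n) (z₀ n))) = 1 / n) :
    Tendsto (fun n : ℕ => c n - dd ρ (c n) (z₀ n)) atTop (nhds 0) := by
  exact cn_sub_d_z0_tendsto_zero_general hα.1 (by simpa only [hc] using hlim)
    (eventually_atTop.2 ⟨2, hz₀⟩)
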